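/- Let 𝒲 be the class of countable graphs G such that only finitely many vertices of infinite degree have finitely many neighbours of infinite degree. Every graph in 𝒲 admits an unfriendly partition. -/

import Mathlib

open Cardinal

/-- A vertex `x` is happy in the two-colouring `π` of `G` if it has at least as many
neighbours in the opposite class as in its own class (as cardinals). -/
def Happy {V : Type*} (G : SimpleGraph V) (π : V → Bool) (x : V) : Prop :=
  #{y : V | G.Adj x y ∧ π y = π x} ≤ #{y : V | G.Adj x y ∧ π y ≠ π x}

/-- A two-colouring is unfriendly if every vertex is happy in it. -/
def Unfriendly {V : Type*} (G : SimpleGraph V) (π : V → Bool) : Prop :=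
  ∀ x : V, Happy G π x

/-- The set of vertices of infinite degree in `G`. -/
def Vinf {V : Type*} (G : SimpleGraph V) : Set V := {v : V | (G.neighborSet v).Infinite}

/-- The set of vertices of infinite degree having only finitely many neighbours of infinite
degree. -/
def Vstar {V : Type*} (G : SimpleGraph V) : Set V :=
  {v : V | (G.neighborSet v).Infinite ∧ (G.neighborSet v ∩ Vinf G).Finite}

/-!
A finite set of vertices of finite degree meets finitely many edges, so flipping it changes the
number of monochromatic edges by a well-defined integer, its cost. If no finite set of vertices of
finite degree has negative cost, then all vertices of finite degree are happy. By compactness, any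
colouring of the vertices of infinite degree extends to such a colouring.

Start from a colouring of the vertices of infinite degree in which each of them with infinitely
many neighbours of infinite degree sees both colours infinitely often among those neighbours, and
extend it in this way. The vertices of infinite degree that are still unhappy lie in `Vstar G`, so
there are finitely many, each with only finitely many opponents. Flipping all of them makes them
happy and lowers the cost of every finite set of vertices of finite degree by at most a constant.
Hence some such set attains the minimal cost. Flipping this set makes the vertices of finite
degree happy again, and it cannot remove infinitely many opponents of any vertex.
-/

section Colorings

variable {V : Type*} {G : SimpleGraph V} {π : V → Bool} {A B X Y : Set V} {x : V}

/-- The set of neighbours of `x` coloured differently from `x`. -/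
def opponents (G : SimpleGraph V) (π : V → Bool) (x : V) : Set V := {y | G.Adj x y ∧ π y ≠ π x}

open scoped Classical in
/-- The colouring obtained from `π` by exchanging the two colours on `X`. -/
noncomputable def flipOn (π : V → Bool) (X : Set V) (v : V) : Bool :=
  if v ∈ X then !π v else π v

lemma flipOn_of_mem {v : V} (hv : v ∈ X) : flipOn π X v = !π v := if_pos hv

lemma flipOn_of_notMem {v : V} (hv : v ∉ X) : flipOn π X v = π v := if_neg hv

lemma flipOn_flipOn (π : V → Bool) (X Y : Set V) :
    flipOn (flipOn π X) Y = flipOn π (symmDiff X Y) := by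
  funext v
  by_cases hX : v ∈ X <;> by_cases hY : v ∈ Y <;>
    simp [flipOn, Set.mem_symmDiff, hX, hY]

lemma happy_of_infinite_opponents [Countable V] (h : (opponents G π x).Infinite) :
    Happy G π x := by
  have : Infinite {y | G.Adj x y ∧ π y ≠ π x} := h.to_subtype
  exact mk_le_aleph0.trans (aleph0_le_mk _)

lemma infinite_opponents_flipOn_of_notMem (hX : X.Finite) (hx : x ∉ X)
    (h : (opponents G π x).Infinite) : (opponents G (flipOn π X) x).Infinite := by
  refine (h.sdiff hX).mono ?_
  rintro y ⟨⟨hxy, hne⟩, hy⟩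
  refine ⟨hxy, ?_⟩
  rwa [flipOn_of_notMem hx, flipOn_of_notMem hy]

lemma infinite_opponents_flipOn_of_mem (hX : X.Finite) (hx : x ∈ X) (hdeg : x ∈ Vinf G)
    (h : (opponents G π x).Finite) : (opponents G (flipOn π X) x).Infinite := by
  refine ((Set.Infinite.sdiff hdeg h).sdiff hX).mono ?_
  rintro y ⟨⟨hxy, hopp⟩, hy⟩
  refine ⟨hxy, ?_⟩
  have heq : π y = π x := by_contra fun hne => hopp ⟨hxy, hne⟩
  simp [flipOn_of_mem hx, flipOn_of_notMem hy, heq]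

-- Baire category: for each member, colour and `n`, having `n` elements of that colour is an open
-- dense condition on the colouring.
lemma exists_coloring_infinite_inter_preimage {ι α : Type*} [Countable ι] {S : ι → Set α}
    (hS : ∀ i, (S i).Infinite) : ∃ c : α → Bool, ∀ i b, (S i ∩ c ⁻¹' {b}).Infinite := by
  let U : ι × Bool × ℕ → Set (α → Bool) := fun p =>
    {c | ∃ T : Finset α, ↑T ⊆ S p.1 ∧ T.card = p.2.2 ∧ ∀ y ∈ T, c y = p.2.1}
  have isOpen_U : ∀ p, IsOpen (U p) := by
    intro p
    simp only [U, Set.ofPred_exists, Set.ofPred_and, Set.ofPred_forall]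
    refine isOpen_iUnion fun T => isOpen_const.inter (isOpen_const.inter ?_)
    exact isOpen_biInter_finset fun y _ =>
      (isOpen_discrete {p.2.1}).preimage (f := fun c : α → Bool => c y) (continuous_apply y)
  have dense_U : ∀ p, Dense (U p) := by
    classical
    rintro ⟨i, b, n⟩ c
    rw [mem_closure_iff]
    intro O hO hc
    obtain ⟨J, u, hu, hJ⟩ := isOpen_pi_iff.1 hO c hc
    obtain ⟨T, hT, hcard⟩ := ((hS i).sdiff J.finite_toSet).exists_subset_card_eq n
    refine ⟨fun v => if v ∈ T then b else c v, hJ fun a ha => ?_, T,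
      hT.trans Set.sdiff_subset, hcard, fun y hy => if_pos hy⟩
    have haT : a ∉ T := fun h => (hT h).2 ha
    simpa [haT] using (hu a ha).2
  obtain ⟨c, hc⟩ := (dense_iInter_of_isOpen isOpen_U dense_U).nonempty
  refine ⟨c, fun i b hfin => ?_⟩
  obtain ⟨T, hTS, hcard, hcol⟩ := Set.mem_iInter.1 hc (i, b, (S i ∩ c ⁻¹' {b}).ncard + 1)
  have hT : ↑T ⊆ S i ∩ c ⁻¹' {b} := fun y hy => ⟨hTS hy, hcol y hy⟩
  have hle := Set.ncard_le_ncard hT hfin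
  rw [Set.ncard_coe_finset] at hle
  lia

lemma exists_coloring_infinite_opponents [Countable V] (G : SimpleGraph V) (A : Set V) :
    ∃ c : V → Bool, ∀ π : V → Bool, A.EqOn π c → ∀ x ∈ A, (G.neighborSet x ∩ A).Infinite →
      (opponents G π x).Infinite := by
  obtain ⟨c, hc⟩ := exists_coloring_infinite_inter_preimage
    (S := fun w : {w // (G.neighborSet w ∩ A).Infinite} => G.neighborSet w ∩ A) (·.2)
  refine ⟨c, fun π hπ x hx hinf => (hc ⟨x, hinf⟩ (!c x)).mono ?_⟩
  rintro y ⟨⟨hxy, hy⟩, hcy : c y = !c x⟩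
  exact ⟨hxy, by simp [hπ hx, hπ hy, hcy]⟩

/-- The indicator of the edges that are monochromatic in the colouring `π`. -/
def monoIndicator (π : V → Bool) (e : Sym2 V) : ℤ := if (e.map π).IsDiag then 1 else 0

lemma monoIndicator_mk (π : V → Bool) (x y : V) :
    monoIndicator π s(x, y) = if π x = π y then 1 else 0 := by
  simp [monoIndicator]

lemma continuous_monoIndicator (e : Sym2 V) : Continuous fun π : V → Bool => monoIndicator π e := by
  induction e with | _ x y
  have continuous_ite : Continuous fun p : Bool × Bool => if p.1 = p.2 then (1 : ℤ) else 0 :=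
    continuous_of_discreteTopology
  simp only [monoIndicator_mk]
  exact continuous_ite.comp (f := fun π : V → Bool => (π x, π y))
    ((continuous_apply x).prodMk (continuous_apply y))

lemma monoIndicator_flipOn_of_forall_notMem {e : Sym2 V} (h : ∀ x ∈ X, x ∉ e) :
    monoIndicator (flipOn π X) e = monoIndicator π e := by
  induction e with | _ x y
  have hx : x ∉ X := fun hx => h x hx (Sym2.mem_mk_left x y)
  have hy : y ∉ X := fun hy => h y hy (Sym2.mem_mk_right x y)
  rw [monoIndicator_mk, monoIndicator_mk, flipOn_of_notMem hx, flipOn_of_notMem hy]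

/-- The set of edges meeting `X`. -/
def edgesMeeting (G : SimpleGraph V) (X : Set V) : Set (Sym2 V) := ⋃ x ∈ X, G.incidenceSet x

lemma incidenceSet_eq_image (G : SimpleGraph V) (x : V) :
    G.incidenceSet x = (s(x, ·)) '' G.neighborSet x := by
  ext e
  induction e with | _ y z
  simp only [SimpleGraph.mk'_mem_incidenceSet_iff, Set.mem_image, SimpleGraph.mem_neighborSet,
    Sym2.eq_iff]
  grind [G.adj_comm]

lemma finite_edgesMeeting (hX : X.Finite) (hdeg : X ⊆ (Vinf G)ᶜ) : (edgesMeeting G X).Finite := by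
  refine hX.biUnion fun x hx => ?_
  rw [incidenceSet_eq_image]
  exact (Set.not_infinite.1 (hdeg hx)).image _

/-- The increase in the number of monochromatic edges when `X` is flipped. It is meaningful when `X`
is a finite set of vertices of finite degree: the sum takes the value `0` if infinitely many edges
change status. -/
noncomputable def flipCost (G : SimpleGraph V) (π : V → Bool) (X : Set V) : ℤ :=
  ∑ᶠ e ∈ G.edgeSet, (monoIndicator (flipOn π X) e - monoIndicator π e)

lemma edgeSet_inter_support_subset_edgesMeeting :
    G.edgeSet ∩ (fun e => monoIndicator (flipOn π X) e - monoIndicator π e).support ⊆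
      edgesMeeting G X := by
  rintro e ⟨he, hne⟩
  by_contra hmeet
  refine hne (sub_eq_zero.2 (monoIndicator_flipOn_of_forall_notMem fun x hx hxe => hmeet ?_))
  exact Set.mem_biUnion hx ⟨he, hxe⟩

lemma edgesMeeting_subset_edgeSet : edgesMeeting G X ⊆ G.edgeSet :=
  Set.iUnion₂_subset fun x _ => G.incidenceSet_subset x

lemma flipCost_eq_finsum_edgesMeeting (G : SimpleGraph V) (π : V → Bool) (X : Set V) :
    flipCost G π X =
      ∑ᶠ e ∈ edgesMeeting G X, (monoIndicator (flipOn π X) e - monoIndicator π e) :=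
  finsum_mem_inter_support_eq' _ _ _ fun _ he =>
    ⟨fun h => edgeSet_inter_support_subset_edgesMeeting ⟨h, he⟩,
      fun h => edgesMeeting_subset_edgeSet h⟩

lemma flipCost_eq_sum (π : V → Bool) (hE : (edgesMeeting G X).Finite) :
    flipCost G π X = ∑ e ∈ hE.toFinset, (monoIndicator (flipOn π X) e - monoIndicator π e) := by
  rw [flipCost_eq_finsum_edgesMeeting, finsum_mem_eq_finite_toFinset_sum _ hE]

lemma continuous_flipCost (hE : (edgesMeeting G X).Finite) :
    Continuous fun π : V → Bool => flipCost G π X := by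
  have continuous_flipOn : Continuous fun π : V → Bool => flipOn π X := by
    refine continuous_pi fun v => ?_
    by_cases hv : v ∈ X
    · simp only [flipOn_of_mem hv]
      exact (continuous_of_discreteTopology (f := not)).comp (continuous_apply v)
    · simpa only [flipOn_of_notMem hv] using continuous_apply v
  simp only [flipCost_eq_sum _ hE]
  exact continuous_finsetSum _ fun e _ =>
    ((continuous_monoIndicator e).comp continuous_flipOn).sub (continuous_monoIndicator e)

lemma flipCost_symmDiff (π : V → Bool) (hX : (edgesMeeting G X).Finite)
    (hY : (edgesMeeting G Y).Finite) :
    flipCost G π (symmDiff X Y) = flipCost G π X + flipCost G (flipOn π X) Y := by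
  unfold flipCost
  rw [← finsum_mem_add_distrib' (hX.subset edgeSet_inter_support_subset_edgesMeeting)
    (hY.subset edgeSet_inter_support_subset_edgesMeeting)]
  simp only [flipOn_flipOn, sub_add_sub_cancel']

lemma flipCost_singleton (hx : x ∉ Vinf G) :
    flipCost G π {x} = (opponents G π x).ncard - ({y | G.Adj x y ∧ π y = π x}.ncard : ℤ) := by
  classical
  have hfin : (G.neighborSet x).Finite := Set.not_infinite.1 hx
  have hopp : opponents G π x = ↑(hfin.toFinset.filter fun y => π y ≠ π x) := by
    ext; simp [opponents]
  have hsame : {y | G.Adj x y ∧ π y = π x} = ↑(hfin.toFinset.filter fun y => π y = π x) := by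
    ext; simp
  have hedges : edgesMeeting G {x} = (s(x, ·)) '' G.neighborSet x := by
    rw [edgesMeeting, Set.biUnion_singleton, incidenceSet_eq_image]
  rw [hopp, hsame, Set.ncard_coe_finset, Set.ncard_coe_finset, flipCost_eq_finsum_edgesMeeting,
    hedges, finsum_mem_image fun _ _ _ _ => Sym2.congr_right.1,
    finsum_mem_eq_finite_toFinset_sum _ hfin, ← Finset.sum_boole, ← Finset.sum_boole,
    ← Finset.sum_sub_distrib]
  refine Finset.sum_congr rfl fun y hy => ?_
  have hyx : y ∉ ({x} : Set V) := (G.ne_of_adj (hfin.mem_toFinset.1 hy)).symm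
  rw [monoIndicator_mk, monoIndicator_mk, flipOn_of_mem (Set.mem_singleton x),
    flipOn_of_notMem hyx]
  cases π x <;> cases π y <;> rfl

lemma happy_of_flipCost_singleton_nonneg (hx : x ∉ Vinf G) (h : 0 ≤ flipCost G π {x}) :
    Happy G π x := by
  have hfin : (G.neighborSet x).Finite := Set.not_infinite.1 hx
  rw [flipCost_singleton hx, sub_nonneg, Nat.cast_le] at h
  unfold Happy
  rw [← Set.cast_ncard (hfin.subset fun _ hy => hy.1),
    ← Set.cast_ncard (hfin.subset fun _ hy => hy.1)]
  exact Nat.cast_le.2 h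

-- Flipping `B` affects the change at `e` only if `e` joins `B` to `X`; such an edge, if
-- monochromatic before, has change `-1` in `π` and `1` after flipping `B`.
lemma monoIndicator_sub_le_flipOn (hXB : Disjoint X B) {e : Sym2 V}
    (he : ∀ b ∈ B, b ∈ e → monoIndicator π e = 1) :
    monoIndicator (flipOn π X) e - monoIndicator π e ≤
      monoIndicator (flipOn (flipOn π B) X) e - monoIndicator (flipOn π B) e := by
  induction e with | _ x y
  have hx : x ∈ X → x ∉ B := fun h => Set.disjoint_left.1 hXB h
  have hy : y ∈ X → y ∉ B := fun h => Set.disjoint_left.1 hXB h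
  simp only [monoIndicator_mk, flipOn, Sym2.mem_iff] at he ⊢
  grind

lemma exists_flipCost_sub_le_flipOn (hB : B.Finite) (hopp : ∀ b ∈ B, (opponents G π b).Finite) :
    ∃ M : ℤ, ∀ X : Set V, (edgesMeeting G X).Finite → Disjoint X B →
      flipCost G π X - M ≤ flipCost G (flipOn π B) X := by
  classical
  have hD : (⋃ b ∈ B, (s(b, ·)) '' opponents G π b).Finite :=
    hB.biUnion fun b hb => (hopp b hb).image _
  let D := hD.toFinset
  refine ⟨2 * D.card, fun X hX hXB => ?_⟩
  have change_le : ∀ e ∈ hX.toFinset,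
      monoIndicator (flipOn π X) e - monoIndicator π e - 2 * (if e ∈ D then 1 else 0) ≤
        monoIndicator (flipOn (flipOn π B) X) e - monoIndicator (flipOn π B) e := by
    intro e he
    split_ifs with heD
    · grind [monoIndicator]
    · rw [mul_zero, sub_zero]
      refine monoIndicator_sub_le_flipOn hXB fun b hb hbe => ?_
      obtain ⟨y, rfl⟩ := hbe
      have hby : G.Adj b y := edgesMeeting_subset_edgeSet (hX.mem_toFinset.1 he)
      rw [monoIndicator_mk, if_pos]
      by_contra hne
      exact heD (hD.mem_toFinset.2 (Set.mem_biUnion hb ⟨y, ⟨hby, Ne.symm hne⟩, rfl⟩))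
  have card_le : ∑ e ∈ hX.toFinset, (if e ∈ D then 1 else 0 : ℤ) ≤ D.card := by
    rw [Finset.sum_boole, Finset.filter_mem_eq_inter]
    exact_mod_cast Finset.card_le_card Finset.inter_subset_right
  have sum_le := Finset.sum_le_sum change_le
  rw [Finset.sum_sub_distrib, ← Finset.mul_sum, ← flipCost_eq_sum, ← flipCost_eq_sum] at sum_le
  linarith

/-- No finite subset of `A` can be flipped so as to decrease the number of monochromatic edges. -/
def FlipStableOn (G : SimpleGraph V) (A : Set V) (π : V → Bool) : Prop :=
  ∀ X ⊆ A, X.Finite → 0 ≤ flipCost G π X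

lemma FlipStableOn.happy (h : FlipStableOn G A π) (hxA : x ∈ A) (hx : x ∉ Vinf G) : Happy G π x :=
  happy_of_flipCost_singleton_nonneg hx
    (h {x} (Set.singleton_subset_iff.2 hxA) (Set.finite_singleton x))

lemma exists_flipStableOn_flipOn_of_bddBelow (hA : A ⊆ (Vinf G)ᶜ)
    (hbdd : BddBelow (flipCost G π '' {X | X ⊆ A ∧ X.Finite})) :
    ∃ X ⊆ A, X.Finite ∧ FlipStableOn G A (flipOn π X) := by
  have hne : {X | X ⊆ A ∧ X.Finite}.Nonempty := ⟨∅, A.empty_subset, Set.finite_empty⟩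
  obtain ⟨X, ⟨hXA, hX⟩, hmin⟩ := Int.csInf_mem (hne.image (flipCost G π)) hbdd
  refine ⟨X, hXA, hX, fun Y hYA hY => ?_⟩
  have hle : flipCost G π X ≤ flipCost G π (symmDiff X Y) :=
    hmin.trans_le (csInf_le hbdd ⟨_, ⟨symmDiff_le_sup.trans (Set.union_subset hXA hYA),
      (hX.union hY).subset symmDiff_le_sup⟩, rfl⟩)
  rw [flipCost_symmDiff π (finite_edgesMeeting hX (hXA.trans hA))
    (finite_edgesMeeting hY (hYA.trans hA))] at hle
  linarith

lemma exists_eqOn_compl_flipStableOn (hA : A ⊆ (Vinf G)ᶜ) (c : V → Bool) :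
    ∃ π : V → Bool, Aᶜ.EqOn π c ∧ FlipStableOn G A π := by
  let C : {X : Set V // X ⊆ A ∧ X.Finite} → Set (V → Bool) := fun X => {π | 0 ≤ flipCost G π X}
  have isClosed_C : ∀ X, IsClosed (C X) := fun X => isClosed_le continuous_const
    (continuous_flipCost (finite_edgesMeeting X.2.2 (X.2.1.trans hA)))
  have isClosed_eqOn : IsClosed {π : V → Bool | Aᶜ.EqOn π c} := by
    simp only [Set.EqOn, Set.ofPred_forall]
    exact isClosed_biInter fun v _ => isClosed_eq (continuous_apply v) continuous_const
  obtain ⟨π, hπc, hπ⟩ := isClosed_eqOn.isCompact.inter_iInter_nonempty C isClosed_C fun u => by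
    let Y : Set V := ⋃ X ∈ u, X
    have hY : Y.Finite := u.finite_toSet.biUnion fun X _ => X.2.2
    have hYA : Y ⊆ A := Set.iUnion₂_subset fun X _ => X.2.1
    obtain ⟨X, hXY, -, hstable⟩ := exists_flipStableOn_flipOn_of_bddBelow (hYA.trans hA)
      (π := c) ((hY.finite_subsets.subset fun X hX => hX.1).image _).bddBelow
    refine ⟨flipOn c X, fun v hv => flipOn_of_notMem fun h => hv (hYA (hXY h)), ?_⟩
    exact Set.mem_iInter₂.2 fun Z hZ => hstable Z (Set.subset_biUnion_of_mem hZ) Z.2.2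
  exact ⟨π, hπc, fun X hXA hX => Set.mem_iInter.1 hπ ⟨X, hXA, hX⟩⟩

lemma FlipStableOn.exists_flipOn_flipOn (hπ : FlipStableOn G A π) (hA : A ⊆ (Vinf G)ᶜ)
    (hAB : Disjoint A B) (hB : B.Finite) (hopp : ∀ b ∈ B, (opponents G π b).Finite) :
    ∃ X ⊆ A, X.Finite ∧ FlipStableOn G A (flipOn (flipOn π B) X) := by
  obtain ⟨M, hM⟩ := exists_flipCost_sub_le_flipOn hB hopp
  refine exists_flipStableOn_flipOn_of_bddBelow hA ⟨-M, ?_⟩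
  rintro _ ⟨X, ⟨hXA, hX⟩, rfl⟩
  linarith [hM X (finite_edgesMeeting hX (hXA.trans hA)) (hAB.mono_left hXA), hπ X hXA hX]

lemma FlipStableOn.exists_unfriendly [Countable V] (hπ : FlipStableOn G (Vinf G)ᶜ π)
    (hB : {x ∈ Vinf G | (opponents G π x).Finite}.Finite) :
    ∃ π : V → Bool, Unfriendly G π := by
  let B := {x ∈ Vinf G | (opponents G π x).Finite}
  have hdisj : Disjoint (Vinf G)ᶜ B := Set.disjoint_compl_left_iff_subset.2 fun _ hb => hb.1
  obtain ⟨X, hXA, hX, hstable⟩ :=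
    hπ.exists_flipOn_flipOn subset_rfl hdisj hB fun _ hb => hb.2
  refine ⟨flipOn (flipOn π B) X, fun x => ?_⟩
  by_cases hx : x ∈ Vinf G
  · have hxX : x ∉ X := fun h => hXA h hx
    refine happy_of_infinite_opponents (infinite_opponents_flipOn_of_notMem hX hxX ?_)
    by_cases hxB : x ∈ B
    · exact infinite_opponents_flipOn_of_mem hB hxB hx hxB.2
    · exact infinite_opponents_flipOn_of_notMem hB hxB fun hfin => hxB ⟨hx, hfin⟩
  · exact hstable.happy hx hx

end Colorings

/-- Every countable graph in which only finitely many vertices of infinite degree have finitely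
many neighbours of infinite degree admits an unfriendly partition. -/
theorem Wclass_unfriendly {V : Type*} [Countable V] (G : SimpleGraph V)
    (hW : (Vstar G).Finite) : ∃ π : V → Bool, Unfriendly G π := by
  obtain ⟨c, hc⟩ := exists_coloring_infinite_opponents G (Vinf G)
  obtain ⟨π, hπc, hπ⟩ := exists_eqOn_compl_flipStableOn (G := G) subset_rfl c
  rw [compl_compl] at hπc
  refine hπ.exists_unfriendly (hW.subset fun x hx => ⟨hx.1, ?_⟩)
  by_contra hinf
  exact hc π hπc x hx.1 hinf hx.2
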